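/- arXiv:math/0509506 — 2 statements merged into one kernel-verified Lean document; each statement's English description precedes it below -/
import Mathlib

section
/- Let π : A → B(H) be a unital *-representation of a unital C*-algebra A and α : A → A a unital injective *-endomorphism. Then there exist a Hilbert space K, an isometry W : H → K, and a unital *-representation ρ : A → B(K) such that W*ρ(α(a))W = π(a) for all a ∈ A. -/
set_option synthInstance.maxHeartbeats 1000000
set_option maxHeartbeats 1000000

open ContinuousLinearMap

universe u v

open scoped InnerProductSpace ComplexOrder

namespace HBExt

lemma nonneg_of_map {A : Type u} [CStarAlgebra A] [PartialOrder A] [StarOrderedRing A]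
    (α : A →⋆ₐ[ℂ] A) (hα : Function.Injective α) (a : A) (h : 0 ≤ α a) : 0 ≤ a := by
  have hsa : IsSelfAdjoint a := by
    apply hα
    rw [map_star]
    exact (IsSelfAdjoint.of_nonneg h)
  rw [StarOrderedRing.nonneg_iff_spectrum_nonneg (R := ℝ) a hsa]
  rw [← hsa.map_spectrum_real α hα]
  exact (StarOrderedRing.nonneg_iff_spectrum_nonneg (R := ℝ) (α a) (.of_nonneg h)).1 h

lemma exists_functional {A : Type u} [CStarAlgebra A] [PartialOrder A] [StarOrderedRing A]
    {H : Type v} [NormedAddCommGroup H] [InnerProductSpace ℂ H] [CompleteSpace H]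
    (α : A →⋆ₐ[ℂ] A) (hα : Function.Injective α)
    (π : A →⋆ₐ[ℂ] (H →L[ℂ] H)) (ξ : H) :
    ∃ f : A →ₚ[ℂ] ℂ, ∀ a, f (α a) = ⟪ξ, π a ξ⟫_ℂ := by
  let αr : A →ₗ[ℝ] A := α.toAlgHom.toLinearMap.restrictScalars ℝ
  have hαr : ∀ a, αr a = α a := fun _ => rfl
  let e := LinearEquiv.ofInjective αr hα
  let φ : A →ₗ[ℝ] ℝ :=
    { toFun := fun a => (⟪ξ, π a ξ⟫_ℂ).re
      map_add' := by intro a b; simp [inner_add_right]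
      map_smul' := by
        intro c a
        have : π (c • a) = (c : ℂ) • π a := by rw [← map_smul]; congr 1
        simp [this, inner_smul_right] }
  have hφ : ∀ a, φ a = (⟪ξ, π a ξ⟫_ℂ).re := fun _ => rfl
  let s : PointedCone ℝ A :=
    { carrier := {a | 0 ≤ a + star a}
      add_mem' := by
        intro a b ha hb
        simp only [Set.mem_ofPred_eq] at *
        rw [star_add, add_add_add_comm]
        exact add_nonneg ha hb
      zero_mem' := by simp
      smul_mem' := by
        rintro ⟨c, hc⟩ a ha
        simp only [Set.mem_ofPred_eq] at *
        have : (⟨c, hc⟩ : {c : ℝ // 0 ≤ c}) • a = c • a := rfl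
        rw [this, star_smul, star_trivial, ← smul_add]
        exact smul_nonneg hc ha }
  have hs : ∀ a, a ∈ s ↔ 0 ≤ a + star a := fun _ => Iff.rfl
  let F : A →ₗ.[ℝ] ℝ := ⟨LinearMap.range αr, φ ∘ₗ e.symm.toLinearMap⟩
  have hF : ∀ a, ∀ h : α a ∈ LinearMap.range αr, F ⟨α a, h⟩ = φ a := by
    intro a h
    have : e a = ⟨α a, h⟩ := rfl
    change φ (e.symm ⟨α a, h⟩) = _
    rw [← this, e.symm_apply_apply]
  have hπ : ∀ a, 0 ≤ a → 0 ≤ ⟪ξ, π a ξ⟫_ℂ := by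
    intro a ha
    obtain ⟨b, rfl⟩ := CStarAlgebra.nonneg_iff_eq_star_mul_self.1 ha
    rw [map_mul, map_star, ContinuousLinearMap.star_eq_adjoint]
    simp only [mul_apply_eq_comp, ContinuousLinearMap.adjoint_inner_right]
    rw [inner_self_eq_norm_sq_to_K]
    have h0 : (0 : ℂ) ≤ ((‖π b ξ‖ ^ 2 : ℝ) : ℂ) := Complex.zero_le_real.2 (sq_nonneg _)
    simpa using h0
  obtain ⟨g, hg1, hg2⟩ := riesz_extension s F (by
    rintro ⟨_, a, rfl⟩ h
    change α a ∈ s at h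
    rw [hs, ← map_star, ← map_add] at h
    have h1 := hπ _ (nonneg_of_map α hα _ h)
    have h2 := hF a ⟨a, rfl⟩
    change 0 ≤ F ⟨α a, _⟩
    rw [h2, hφ]
    have h3 := (Complex.le_def.1 h1).1
    rw [map_add, map_star, ContinuousLinearMap.star_eq_adjoint, ContinuousLinearMap.add_apply,
      inner_add_right, ContinuousLinearMap.adjoint_inner_right, Complex.add_re,
      ← inner_conj_symm (π a ξ) ξ, Complex.conj_re] at h3
    simp at h3
    linarith) (by
    intro y
    refine ⟨⟨α (‖y + star y‖ • 1), ⟨_, rfl⟩⟩, ?_⟩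
    rw [hs]
    have hsa : IsSelfAdjoint (y + star y) := IsSelfAdjoint.add_star_self y
    have h1 := hsa.neg_algebraMap_norm_le_self
    have h2 : α (‖y + star y‖ • 1) = algebraMap ℝ A ‖y + star y‖ := by
      rw [Algebra.algebraMap_eq_smul_one]
      change αr _ = _
      rw [map_smul, hαr, map_one]
    have h3 : 0 ≤ algebraMap ℝ A ‖y + star y‖ := algebraMap_nonneg _ (norm_nonneg _)
    simp only [h2, star_add, (IsSelfAdjoint.of_nonneg h3).star_eq]
    have h4 : (0:A) ≤ algebraMap ℝ A ‖y + star y‖ + ((algebraMap ℝ A ‖y + star y‖) + (y + star y)) :=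
      add_nonneg h3 (by rw [← sub_nonneg] at h1; simpa [add_comm] using h1)
    convert h4 using 1
    abel)
  have hgα : ∀ a, g (α a) = (⟪ξ, π a ξ⟫_ℂ).re := by
    intro a
    rw [← hφ, ← hF a ⟨a, rfl⟩, ← hg1]
  have hskew : ∀ a, star a = -a → g a = 0 := by
    intro a ha
    apply le_antisymm
    · have := hg2 (-a) (by rw [hs]; simp [ha])
      simpa using this
    · exact hg2 a (by rw [hs]; simp [ha])
  refine ⟨PositiveLinearMap.mk₀ (Module.Dual.extendRCLike (𝕜 := ℂ) g) ?_, ?_⟩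
  · intro a ha
    rw [Module.Dual.extendRCLike_apply, hskew (RCLike.I • a)]
    · simp
      exact hg2 a ((hs a).2 (add_nonneg ha (star_nonneg_iff.2 ha)))
    · simp [(IsSelfAdjoint.of_nonneg ha).star_eq]
  · intro a
    change Module.Dual.extendRCLike (𝕜 := ℂ) g (α a) = _
    rw [Module.Dual.extendRCLike_apply, ← map_smul, hgα, hgα]
    apply Complex.ext <;> simp [inner_smul_right]

/-- direct sum -/
noncomputable def dsum {A : Type u} [CStarAlgebra A] {ι : Type v} (G : ι → Type u)
    [∀ i, NormedAddCommGroup (G i)] [∀ i, InnerProductSpace ℂ (G i)] [∀ i, CompleteSpace (G i)]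
    (ρ : ∀ i, A →⋆ₐ[ℂ] (G i →L[ℂ] G i)) : A →⋆ₐ[ℂ] (lp G 2 →L[ℂ] lp G 2) where
  toFun a := lp.mapCLM 2 (fun i => ρ i a) (norm_nonneg a)
    (fun i => NonUnitalStarAlgHom.norm_apply_le (ρ i) a)
  map_one' := by ext; simp
  map_mul' a b := by ext; simp
  map_zero' := by ext; simp
  map_add' a b := by ext; simp
  commutes' r := by ext; simp [Algebra.algebraMap_eq_smul_one]
  map_star' a := by
    rw [ContinuousLinearMap.star_eq_adjoint, ContinuousLinearMap.eq_adjoint_iff]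
    intro x y
    simp [lp.inner_eq_tsum, map_star, ContinuousLinearMap.star_eq_adjoint,
      ContinuousLinearMap.adjoint_inner_left]

lemma exists_isometry {ι : Type*} {H K : Type*}
    [NormedAddCommGroup H] [InnerProductSpace ℂ H] [CompleteSpace H]
    [NormedAddCommGroup K] [InnerProductSpace ℂ K] [CompleteSpace K]
    (x : ι → H) (y : ι → K) (h : ∀ i j, ⟪x i, x j⟫_ℂ = ⟪y i, y j⟫_ℂ)
    (hd : (Submodule.span ℂ (Set.range x)).topologicalClosure = ⊤) :
    ∃ W : H →L[ℂ] K, adjoint W ∘L W = 1 ∧ ∀ i, W (x i) = y i := by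
  let U := Finsupp.linearCombination ℂ x
  let V := Finsupp.linearCombination ℂ y
  have hUV : ∀ c d, ⟪U c, U d⟫_ℂ = ⟪V c, V d⟫_ℂ := by
    intro c d
    simp only [U, V, Finsupp.linearCombination_apply, Finsupp.sum_inner, Finsupp.inner_sum,
      inner_smul_left, inner_smul_right, h]
  have hn : ∀ c, ‖V c‖ = ‖U c‖ := by
    intro c
    rw [@norm_eq_sqrt_re_inner ℂ, @norm_eq_sqrt_re_inner ℂ _ _ _ _ (U c), hUV]
  have hdense : DenseRange U := by
    have : Set.range U = (Submodule.span ℂ (Set.range x) : Set H) := by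
      rw [← Finsupp.range_linearCombination]; rfl
    rw [DenseRange, this, Submodule.dense_iff_topologicalClosure_eq_top]
    exact hd
  have hW : ∀ c, V.extendOfNorm U (U c) = V c :=
    LinearMap.extendOfNorm_eq hdense ⟨1, fun c => by rw [hn, one_mul]⟩
  refine ⟨V.extendOfNorm U, ?_, ?_⟩
  · rw [← ContinuousLinearMap.norm_map_iff_adjoint_comp_self]
    intro z
    refine hdense.induction (P := fun z => ‖V.extendOfNorm U z‖ = ‖z‖) ?_ ?_ z
    · rintro _ ⟨c, rfl⟩
      rw [hW, hn]
    · exact isClosed_eq (by fun_prop) (by fun_prop)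
  · intro i
    have := hW (Finsupp.single i 1)
    simpa [U, V] using this

lemma exists_cyclic {A : Type u} [CStarAlgebra A]
    {H : Type v} [NormedAddCommGroup H] [InnerProductSpace ℂ H] [CompleteSpace H]
    (π : A →⋆ₐ[ℂ] (H →L[ℂ] H)) :
    ∃ S : Set H, (∀ x ∈ S, ∀ y ∈ S, x ≠ y → ∀ a, ⟪x, π a y⟫_ℂ = 0) ∧
      (Submodule.span ℂ (Set.range fun p : A × S => π p.1 p.2)).topologicalClosure = ⊤ := by
  obtain ⟨S, hS⟩ := zorn_subset
    {S : Set H | ∀ x ∈ S, ∀ y ∈ S, x ≠ y → ∀ a, ⟪x, π a y⟫_ℂ = 0} (by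
    intro c hc hchain
    refine ⟨⋃₀ c, ?_, fun s hs => Set.subset_sUnion_of_mem hs⟩
    rintro x ⟨s, hs, hxs⟩ y ⟨t, ht, hyt⟩ hxy a
    rcases hchain.total hs ht with h | h
    · exact hc ht x (h hxs) y hyt hxy a
    · exact hc hs x hxs y (h hyt) hxy a)
  have hS1 : ∀ x ∈ S, ∀ y ∈ S, x ≠ y → ∀ a, ⟪x, π a y⟫_ℂ = 0 := hS.prop
  refine ⟨S, hS1, ?_⟩
  rw [Submodule.topologicalClosure_eq_top_iff, Submodule.eq_bot_iff]
  intro v hv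
  rw [Submodule.mem_orthogonal] at hv
  have hv1 : ∀ a, ∀ x ∈ S, ⟪π a x, v⟫_ℂ = 0 := fun a x hx =>
    hv _ (Submodule.subset_span ⟨(a, ⟨x, hx⟩), rfl⟩)
  have hv2 : ∀ a, ∀ x ∈ S, ⟪x, π a v⟫_ℂ = 0 := by
    intro a x hx
    have := hv1 (star a) x hx
    rwa [map_star, ContinuousLinearMap.star_eq_adjoint,
      ContinuousLinearMap.adjoint_inner_left] at this
  have hv3 : ∀ a, ∀ x ∈ S, ⟪v, π a x⟫_ℂ = 0 := by
    intro a x hx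
    rw [← inner_conj_symm, hv1 a x hx, map_zero]
  have hmem : v ∈ S := by
    refine hS.le_of_ge (y := insert v S) ?_ (Set.subset_insert v S) (Set.mem_insert v S)
    rintro x (rfl | hx) y (rfl | hy) hxy a
    · exact absurd rfl hxy
    · exact hv3 a y hy
    · exact hv2 a x hx
    · exact hS1 x hx y hy hxy a
  have := hv1 1 v hmem
  simpa using this

end HBExt
open HBExt

/-- **Lemma HB.** Given a unital `*`-representation `π : A → B(H)` and
a unital injective `*`-endomorphism `α` of `A`, there exist a Hilbert space `K`, an
isometry `W : H → K` and a unital `*`-representation `ρ : A → B(K)` such that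
`W* ρ(α a) W = π a` for all `a ∈ A`. -/
theorem exists_extension
    {A : Type u} [CStarAlgebra A]
    {H : Type v} [NormedAddCommGroup H] [InnerProductSpace ℂ H] [CompleteSpace H]
    (α : A →⋆ₐ[ℂ] A) (hα : Function.Injective α) (hαone : α 1 = 1)
    (π : A →⋆ₐ[ℂ] (H →L[ℂ] H)) :
    ∃ (K : Type (max u v)) (_ : NormedAddCommGroup K) (_ : InnerProductSpace ℂ K)
      (_ : CompleteSpace K) (ρ : A →⋆ₐ[ℂ] (K →L[ℂ] K)) (W : H →L[ℂ] K),
      adjoint W ∘L W = 1 ∧ ∀ a : A, adjoint W ∘L ρ (α a) ∘L W = π a := by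
  classical
  letI := CStarAlgebra.spectralOrder A
  haveI := CStarAlgebra.spectralOrderedRing A
  obtain ⟨S, hS1, hS2⟩ := exists_cyclic π
  choose f hf using exists_functional α hα π
  let G : S → Type u := fun x => (f x).GNS
  let ρ : A →⋆ₐ[ℂ] (lp G 2 →L[ℂ] lp G 2) := dsum G (fun x => (f x).gnsStarAlgHom)
  let y : A × S → lp G 2 := fun p => lp.single 2 p.2 (((f p.2).toPreGNS (α p.1) : (f p.2).PreGNS) : (f p.2).GNS)
  have hy : ∀ p q, ⟪π p.1 p.2, π q.1 q.2⟫_ℂ = ⟪y p, y q⟫_ℂ := by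
    rintro ⟨a, x⟩ ⟨b, z⟩
    have h1 : ⟪π a x, π b z⟫_ℂ = ⟪(x : H), π (star a * b) z⟫_ℂ := by
      rw [map_mul, map_star, ContinuousLinearMap.star_eq_adjoint, mul_apply_eq_comp,
        ContinuousLinearMap.adjoint_inner_right]
    simp only [y]
    rw [h1, lp.inner_single_left]
    by_cases hxz : x = z
    · subst hxz
      rw [lp.single_apply_self, UniformSpace.Completion.inner_coe,
        PositiveLinearMap.preGNS_inner_def, ← hf]
      simp [map_star]
    · rw [lp.single_apply_ne _ _ _ hxz, inner_zero_right]
      exact hS1 x x.2 z z.2 (fun h => hxz (Subtype.ext h)) _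
  obtain ⟨W, hW1, hW2⟩ := exists_isometry (fun p : A × S => π p.1 p.2) y hy hS2
  have hρ : ∀ a p, ρ (α a) (y p) = y (a * p.1, p.2) := by
    rintro a ⟨b, x⟩
    apply lp.ext
    funext z
    change (f z).gnsStarAlgHom (α a) (y (b, x) z) = _
    by_cases hxz : z = x
    · subst hxz
      simp [y]
    · simp only [y]
      rw [lp.single_apply_ne _ _ _ hxz, lp.single_apply_ne _ _ _ hxz, map_zero]
  have hint : ∀ a, ρ (α a) ∘L W = W ∘L π a := by
    intro a
    refine ContinuousLinearMap.ext_on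
      ((Submodule.dense_iff_topologicalClosure_eq_top).2 hS2) ?_
    rintro _ ⟨⟨b, x⟩, rfl⟩
    have h1 := hW2 (b, x)
    have h2 := hW2 (a * b, x)
    simp only [map_mul, mul_apply_eq_comp] at h1 h2
    simp only [ContinuousLinearMap.comp_apply]
    rw [h1, h2, hρ]
  refine ⟨lp G 2, inferInstance, inferInstance, inferInstance, ρ, W, hW1, ?_⟩
  intro a
  rw [hint, ← ContinuousLinearMap.comp_assoc, hW1]
  rfl
end

section
/- Every contractive covariant representation (π, T) of (A, α) on H extends to a coisometric covariant representation (ρ, V) on a Hilbert space K ⊇ H: ρ(a)H ⊆ H with ρ(a)|H = π(a), VH ⊆ H with V|H = T, Vρ(α(a)) = ρ(a)V for all a ∈ A, and VV* = I. -/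
set_option synthInstance.maxHeartbeats 1000000
set_option maxHeartbeats 1000000
open ContinuousLinearMap
universe u v
universe w

namespace CoisoExt
open scoped InnerProductSpace

section lpstuff
variable {I : Type*} {G : I → Type*} [∀ i, NormedAddCommGroup (G i)]
  [∀ i, InnerProductSpace ℂ (G i)]

/-- diagonal operator -/
noncomputable def diag (C : ℝ) (hC : 0 ≤ C) (S : ∀ i, G i →L[ℂ] G i) (hS : ∀ i, ‖S i‖ ≤ C) :
    lp G 2 →L[ℂ] lp G 2 :=
  LinearMap.mkContinuous
    { toFun := fun x => ⟨fun i => S i (x i), by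
        have h := (lp.memℓp x).const_smul (C : ℂ)
        refine h.mono' (fun i => ?_)
        have := (S i).le_of_opNorm_le (hS i) (x i)
        simpa [norm_smul, abs_of_nonneg hC] using this⟩
      map_add' := fun x y => by ext i; simp; rfl
      map_smul' := fun c x => by ext i; simp } C (fun x => by
        have h : ‖(C : ℂ) • x‖ = C * ‖x‖ := by rw [norm_smul]; simp [abs_of_nonneg hC]
        rw [← h]
        refine lp.norm_mono (by norm_num) (fun i => ?_)
        have := (S i).le_of_opNorm_le (hS i) (x i)
        rw [lp.coeFn_smul, Pi.smul_apply, norm_smul]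
        simpa [abs_of_nonneg hC] using this)

@[simp] lemma diag_apply (C : ℝ) (hC : 0 ≤ C) (S : ∀ i, G i →L[ℂ] G i) (hS : ∀ i, ‖S i‖ ≤ C)
    (x : lp G 2) (i : I) : diag C hC S hS x i = S i (x i) := rfl

variable [∀ i, CompleteSpace (G i)] {A : Type*} [CStarAlgebra A]

noncomputable def dsum (σ : ∀ i, A →⋆ₐ[ℂ] (G i →L[ℂ] G i)) :
    A →⋆ₐ[ℂ] (lp G 2 →L[ℂ] lp G 2) where
  toFun a := diag ‖a‖ (norm_nonneg a) (fun i => σ i a)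
    (fun i => NonUnitalStarAlgHom.norm_apply_le (σ i) a)
  map_one' := by ext x i; simp
  map_mul' a b := by ext x i; simp
  map_zero' := by ext x i; simp
  map_add' a b := by ext x i; simp
  commutes' r := by ext x i; simp [Algebra.algebraMap_eq_smul_one]
  map_star' a := by
    rw [ContinuousLinearMap.star_eq_adjoint, ContinuousLinearMap.eq_adjoint_iff]
    intro x y
    rw [lp.inner_eq_tsum, lp.inner_eq_tsum]
    refine tsum_congr fun i => ?_
    simp only [diag_apply, map_star, ContinuousLinearMap.star_eq_adjoint]
    rw [ContinuousLinearMap.adjoint_inner_left]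

@[simp] lemma dsum_apply (σ : ∀ i, A →⋆ₐ[ℂ] (G i →L[ℂ] G i)) (a : A) (x : lp G 2) (i : I) :
    dsum σ a x i = σ i a (x i) := rfl

end lpstuff

section ext
variable {A : Type u} [CStarAlgebra A] [PartialOrder A] [StarOrderedRing A]

lemma reflect (α : A →⋆ₐ[ℂ] A) (hα : Function.Injective α) {b : A} (hb : IsSelfAdjoint b)
    (h : 0 ≤ α b) : 0 ≤ b := by
  rw [StarOrderedRing.nonneg_iff_spectrum_nonneg (R := ℝ) b hb]
  rw [← IsSelfAdjoint.map_spectrum_real hb α hα]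
  exact fun x hx => spectrum_nonneg_of_nonneg h hx

open scoped ComplexOrder ComplexStarModule

lemma extend_pos (α : A →⋆ₐ[ℂ] A) (hα : Function.Injective α) (φ : A →ₚ[ℂ] ℂ) :
    ∃ f : A →ₚ[ℂ] ℂ, ∀ a, f (α a) = φ a := by
  let s : PointedCone ℝ A :=
    { carrier := {a | 0 ≤ (ℜ a : A)}
      zero_mem' := by simp
      add_mem' := fun {a b} ha hb => by
        simp only [Set.mem_ofPred_eq, map_add, AddSubgroup.coe_add] at *
        exact add_nonneg ha hb
      smul_mem' := fun c a ha => by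
        have : (ℜ (c • a) : A) = (c : ℝ) • (ℜ a : A) := by
          have : c • a = (c : ℝ) • a := rfl
          rw [this, map_smul]; rfl
        simp only [Set.mem_ofPred_eq] at *
        rw [this]
        exact smul_nonneg c.2 ha }
  let αl : A →ₗ[ℝ] A := α.toAlgHom.toLinearMap.restrictScalars ℝ
  have hαl : ∀ a, αl a = α a := fun a => rfl
  let e := LinearEquiv.ofInjective αl hα
  let φr : A →ₗ[ℝ] ℝ := Complex.reLm ∘ₗ (φ.toLinearMap.restrictScalars ℝ)
  have hφr : ∀ a, φr a = (φ a).re := fun a => rfl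
  have hre : ∀ a, (ℜ (α a) : A) = α (ℜ a : A) := fun a => by
    rw [realPart_apply_coe, realPart_apply_coe, ← hαl (_ • _), map_smul, map_add, hαl, hαl, map_star]
  have him : ∀ a : A, IsSelfAdjoint a → (φ a).im = 0 := fun a ha => by
    have h : star (φ a) = φ a := by rw [← map_star φ, ha.star_eq]
    exact Complex.conj_eq_iff_im.1 h
  have hφre : ∀ a : A, (φ a).re = (φ (ℜ a : A)).re := fun a => by
    conv_lhs => rw [← realPart_add_I_smul_imaginaryPart a]
    simp [him _ (ℑ a).2]
  obtain ⟨g, hg1, hg2⟩ := riesz_extension s ⟨LinearMap.range αl, φr ∘ₗ e.symm.toLinearMap⟩ (by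
      rintro ⟨_, b, rfl⟩ hx
      have he : e.symm ⟨αl b, ⟨b, rfl⟩⟩ = b := by
        rw [LinearEquiv.symm_apply_eq]; rfl
      change 0 ≤ φr (e.symm ⟨αl b, ⟨b, rfl⟩⟩)
      rw [he, hφr, hφre]
      have h2 : 0 ≤ α (ℜ b : A) := by rw [← hre]; exact hx
      have h3 := reflect α hα (ℜ b).2 h2
      exact (Complex.le_def.1 (φ.map_nonneg h3)).1) (by
      intro y
      refine ⟨⟨αl (algebraMap ℝ A ‖(ℜ y : A)‖), ⟨_, rfl⟩⟩, ?_⟩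
      have h1 : αl (algebraMap ℝ A ‖(ℜ y : A)‖) = algebraMap ℝ A ‖(ℜ y : A)‖ := by
        rw [Algebra.algebraMap_eq_smul_one, map_smul]; simp [hαl]
      change 0 ≤ (ℜ (αl (algebraMap ℝ A ‖(ℜ y : A)‖) + y) : A)
      rw [h1, map_add]
      have h4 : (ℜ (algebraMap ℝ A ‖(ℜ y : A)‖) : A) = algebraMap ℝ A ‖(ℜ y : A)‖ := by
        refine IsSelfAdjoint.coe_realPart (IsSelfAdjoint.algebraMap A (IsSelfAdjoint.all _))
      rw [AddSubgroup.coe_add, h4]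
      have := IsSelfAdjoint.neg_algebraMap_norm_le_self (a := (ℜ y : A)) (ℜ y).2
      rw [add_comm]
      exact neg_le_iff_add_nonneg.1 this)
  have hg : ∀ a, g (α a) = (φ a).re := fun a => by
    have h := hg1 ⟨αl a, ⟨a, rfl⟩⟩
    have he : e.symm ⟨αl a, ⟨a, rfl⟩⟩ = a := by
      rw [LinearEquiv.symm_apply_eq]; rfl
    change g (αl a) = φr (e.symm ⟨αl a, ⟨a, rfl⟩⟩) at h
    rw [he] at h
    exact h
  let F : A →ₗ[ℂ] ℂ := Module.Dual.extendRCLike (𝕜 := ℂ) g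
  have hF : ∀ a, F a = (g a : ℂ) - Complex.I * (g (Complex.I • a) : ℂ) := fun a => 
    Module.Dual.extendRCLike_apply g a
  have hskew : ∀ a : A, IsSelfAdjoint a → g (Complex.I • a) = 0 := fun a ha => by
    have h0 : (ℜ (Complex.I • a) : A) = 0 := by
      rw [realPart_I_smul, ha.imaginaryPart]; simp
    have h1 : 0 ≤ g (Complex.I • a) := hg2 _ (le_of_eq h0.symm)
    have h2 : 0 ≤ g (-(Complex.I • a)) := hg2 _ (by
      change 0 ≤ (ℜ (-(Complex.I • a)) : A)
      rw [map_neg, AddSubgroup.coe_neg, h0, neg_zero])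
    rw [map_neg] at h2
    linarith
  refine ⟨PositiveLinearMap.mk₀ F (fun a ha => ?_), fun a => ?_⟩
  · rw [hF, hskew a (IsSelfAdjoint.of_nonneg ha)]
    have : 0 ≤ g a := hg2 a (by
      change 0 ≤ (ℜ a : A)
      rwa [(IsSelfAdjoint.of_nonneg ha).coe_realPart])
    simpa using this
  · change F (α a) = φ a
    rw [hF, ← map_smul α, hg, hg, map_smul φ]
    apply Complex.ext <;> simp



lemma exists_vecFun {L : Type w} [NormedAddCommGroup L] [InnerProductSpace ℂ L] [CompleteSpace L]
    (σ : A →⋆ₐ[ℂ] (L →L[ℂ] L)) (x : L) : ∃ φ : A →ₚ[ℂ] ℂ, ∀ a, φ a = ⟪x, σ a x⟫_ℂ := by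
  let F : A →ₗ[ℂ] ℂ :=
    { toFun := fun a => ⟪x, σ a x⟫_ℂ
      map_add' := fun a b => by simp [inner_add_right]
      map_smul' := fun c a => by simp [inner_smul_right] }
  refine ⟨PositiveLinearMap.mk₀ F (fun a ha => ?_), fun a => rfl⟩
  obtain ⟨b, rfl⟩ := CStarAlgebra.nonneg_iff_eq_star_mul_self.1 ha
  change 0 ≤ ⟪x, σ (star b * b) x⟫_ℂ
  rw [map_mul, map_star, ContinuousLinearMap.star_eq_adjoint, mul_apply_eq_comp,
    ContinuousLinearMap.adjoint_inner_right]
  rw [inner_self_eq_norm_sq_to_K]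
  have h : (0 : ℂ) ≤ ((‖σ b x‖ ^ 2 : ℝ) : ℂ) := Complex.zero_le_real.2 (sq_nonneg _)
  simpa using h

lemma extend_rep (α : A →⋆ₐ[ℂ] A) (hα : Function.Injective α)
    {L : Type w} [NormedAddCommGroup L] [InnerProductSpace ℂ L] [CompleteSpace L]
    (σ : A →⋆ₐ[ℂ] (L →L[ℂ] L)) :
    ∃ (L' : Type (max u w)) (_ : NormedAddCommGroup L') (_ : InnerProductSpace ℂ L')
      (_ : CompleteSpace L') (σ' : A →⋆ₐ[ℂ] (L' →L[ℂ] L')) (J : L →L[ℂ] L'),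
      (∀ x, ‖J x‖ = ‖x‖) ∧ ∀ a x, J (σ a x) = σ' (α a) (J x) := by
  classical
  have h1 : ∀ x : L, ∃ f : A →ₚ[ℂ] ℂ, ∀ a, f (α a) = ⟪x, σ a x⟫_ℂ := fun x => by
    obtain ⟨φ, hφ⟩ := exists_vecFun σ x
    obtain ⟨f, hf⟩ := extend_pos α hα φ
    exact ⟨f, fun a => (hf a).trans (hφ a)⟩
  choose f hf using h1
  have hσ : ∀ a b x y, ⟪σ a x, σ b y⟫_ℂ = ⟪x, σ (star a * b) y⟫_ℂ := fun a b x y => by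
    rw [map_mul, map_star, ContinuousLinearMap.star_eq_adjoint, mul_apply_eq_comp,
      ContinuousLinearMap.adjoint_inner_right]
  obtain ⟨S, hS⟩ := zorn_subset {S : Set L | S.Pairwise (fun x y => ∀ a, ⟪x, σ a y⟫_ℂ = 0)} (by
    intro c hc hchain
    refine ⟨⋃₀ c, ?_, fun s hs => Set.subset_sUnion_of_mem hs⟩
    exact (Set.pairwise_sUnion hchain.directedOn).2 hc)
  have hSp : S.Pairwise (fun x y => ∀ a, ⟪x, σ a y⟫_ℂ = 0) := hS.prop
  let G : S → Type u := fun x => (f x).GNS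
  let Φ : (S →₀ A) →ₗ[ℂ] L := Finsupp.lsum ℂ (fun x : S =>
    (ContinuousLinearMap.apply ℂ L (x : L)).toLinearMap ∘ₗ σ.toAlgHom.toLinearMap)
  let q : ∀ x : S, A →ₗ[ℂ] G x := fun x =>
    (UniformSpace.Completion.toComplL (𝕜 := ℂ) (E := (f x).PreGNS)).toLinearMap ∘ₗ
      (f x).toPreGNS.toLinearMap
  have hq : ∀ (x : S) (a b : A), ⟪q x a, q x b⟫_ℂ = f x (star a * b) := fun x a b => by
    exact UniformSpace.Completion.inner_coe _ _
  let σ' : A →⋆ₐ[ℂ] (lp G 2 →L[ℂ] lp G 2) := dsum (fun x : S => (f x).gnsStarAlgHom)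
  have hq2 : ∀ (x : S) (a b : A), (f x).gnsStarAlgHom a (q x b) = q x (a * b) := fun x a b => by
    exact (f x).gnsNonUnitalStarAlgHom_apply_coe
  let Ψ : (S →₀ A) →ₗ[ℂ] lp G 2 := Finsupp.lsum ℂ (fun x : S =>
    (lp.lsingle (𝕜 := ℂ) 2 x) ∘ₗ q x ∘ₗ α.toAlgHom.toLinearMap)
  have hΦs : ∀ x a, Φ (Finsupp.single x a) = σ a x := fun x a => by
    simp [Φ]
  have hΨs : ∀ x a, Ψ (Finsupp.single x a) = lp.single 2 x (q x (α a)) := fun x a => by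
    simp only [Ψ, Finsupp.lsum_single]; rfl
  have hinner : ∀ b c, ⟪Φ b, Φ c⟫_ℂ = ⟪Ψ b, Ψ c⟫_ℂ := by
    intro b c
    induction b using Finsupp.induction_linear with
    | zero => simp
    | add b b' h h' => simp only [map_add, inner_add_left, h, h']; exact (inner_add_left _ _ _).symm
    | single x a =>
      induction c using Finsupp.induction_linear with
      | zero => simp
      | add b b' h h' => simp only [map_add, inner_add_right, h, h']; exact (inner_add_right _ _ _).symm
      | single y b =>
        rw [hΦs, hΦs, hΨs, hΨs, hσ, lp.inner_single_left]
        by_cases hxy : x = y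
        · subst hxy
          rw [lp.single_apply_self, hq, ← map_star, ← map_mul, hf]
        · rw [lp.single_apply_ne _ _ _ hxy, inner_zero_right]
          exact hSp x.2 y.2 (fun h => hxy (Subtype.ext h)) _
  have hnorm : ∀ b, ‖Ψ b‖ = ‖Φ b‖ := fun b => by
    rw [@norm_eq_sqrt_re_inner ℂ, @norm_eq_sqrt_re_inner ℂ, hinner]
  have hdense : DenseRange Φ := by
    have : (LinearMap.range Φ).topologicalClosure = ⊤ := by
      rw [Submodule.topologicalClosure_eq_top_iff, Submodule.eq_bot_iff]
      intro y hy
      have hy1 : ∀ x ∈ S, ∀ a, ⟪σ a x, y⟫_ℂ = 0 := fun x hx a =>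
        hy _ ⟨Finsupp.single ⟨x, hx⟩ a, hΦs _ _⟩
      have hy2 : ∀ x ∈ S, ∀ a, ⟪x, σ a y⟫_ℂ = 0 := fun x hx a => by
        have := hy1 x hx (star a)
        rwa [map_star, ContinuousLinearMap.star_eq_adjoint,
          ContinuousLinearMap.adjoint_inner_left] at this
      have hy3 : ∀ x ∈ S, ∀ a, ⟪y, σ a x⟫_ℂ = 0 := fun x hx a => by
        rw [← inner_conj_symm, hy1 x hx a, map_zero]
      have hyS : y ∈ S := by
        have hins : (insert y S).Pairwise (fun x y => ∀ a, ⟪x, σ a y⟫_ℂ = 0) :=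
          hSp.insert (fun x hx _ => ⟨hy3 x hx, hy2 x hx⟩)
        exact hS.le_of_ge hins (Set.subset_insert y S) (Set.mem_insert y S)
      have := hy1 y hyS 1
      simpa using this
    rw [DenseRange, ← LinearMap.coe_range]
    exact (Submodule.dense_iff_topologicalClosure_eq_top).2 this
  let J : L →L[ℂ] lp G 2 := Ψ.extendOfNorm Φ
  have hJ : ∀ b, J (Φ b) = Ψ b := fun b =>
    LinearMap.extendOfNorm_eq hdense ⟨1, fun x => by rw [hnorm, one_mul]⟩ b
  refine ⟨lp G 2, inferInstance, inferInstance, inferInstance, σ', J, ?_, ?_⟩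
  · intro x
    refine hdense.induction_on (p := fun x => ‖J x‖ = ‖x‖) x
      (isClosed_eq (by fun_prop) (by fun_prop)) (fun b => ?_)
    rw [hJ, hnorm]
  · intro a x
    refine hdense.induction_on (p := fun x => J (σ a x) = σ' (α a) (J x)) x
      (isClosed_eq (by fun_prop) (by fun_prop)) (fun b => ?_)
    rw [hJ]
    induction b using Finsupp.induction_linear with
    | zero => simp
    | add b b' h h' => simp only [map_add, h, h']
    | single x c =>
      have h1 : σ a (Φ (Finsupp.single x c)) = Φ (Finsupp.single x (a * c)) := by
        rw [hΦs, hΦs, map_mul]; rfl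
      rw [h1, hJ, hΨs, hΨs]
      ext y
      rw [dsum_apply]
      by_cases hxy : y = x
      · subst hxy
        rw [lp.single_apply_self, lp.single_apply_self, hq2, map_mul]
      · rw [lp.single_apply_ne _ _ _ hxy, lp.single_apply_ne _ _ _ hxy, map_zero]

end ext

section seq

lemma adj_cov {A : Type u} [CStarAlgebra A] {H : Type w} [NormedAddCommGroup H]
    [InnerProductSpace ℂ H] [CompleteSpace H] (π : A →⋆ₐ[ℂ] (H →L[ℂ] H)) (T : H →L[ℂ] H)
    (β γ : A →⋆ₐ[ℂ] A) (h : ∀ a, T * π (β a) = π (γ a) * T) (a : A) :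
    star T * π (γ a) = π (β a) * star T := by
  have h := congrArg star (h (star a))
  rw [star_mul, star_mul, map_star, map_star, map_star, map_star, star_star, star_star] at h
  exact h.symm

variable {G : ℕ → Type w} [∀ i, NormedAddCommGroup (G i)]
  [∀ i, InnerProductSpace ℂ (G i)]

lemma lp_summable (x : lp G 2) : Summable fun n => ‖x n‖ ^ 2 := by
  have := (lp.memℓp x).summable (by norm_num)
  simpa using this

lemma lp_norm_sq (x : lp G 2) : ‖x‖ ^ 2 = ∑' n, ‖x n‖ ^ 2 := by
  have := lp.norm_rpow_eq_tsum (by norm_num) x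
  simpa using this

/-- shift -/
def shiftFun (B : G 0 →L[ℂ] G 0) (E : ∀ n, G n →L[ℂ] G (n+1)) (x : ∀ n, G n) : ∀ n, G n
  | 0 => B (x 0)
  | n+1 => E n (x n)

lemma exists_shift (B : G 0 →L[ℂ] G 0) (E : ∀ n, G n →L[ℂ] G (n+1))
    (h0 : ∀ x, ‖B x‖ ^ 2 + ‖E 0 x‖ ^ 2 = ‖x‖ ^ 2) (hE : ∀ n x, ‖E (n+1) x‖ = ‖x‖) :
    ∃ C : lp G 2 →L[ℂ] lp G 2, (∀ x, ‖C x‖ = ‖x‖) ∧ (∀ x, C x 0 = B (x 0)) ∧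
      ∀ x n, C x (n+1) = E n (x n) := by
  have hle : ∀ n x, ‖E n x‖ ^ 2 ≤ ‖x‖ ^ 2 := by
    intro n x
    cases n with
    | zero => rw [← h0 x]; nlinarith [sq_nonneg ‖B x‖]
    | succ n => rw [hE]
  have hs1 : ∀ x : lp G 2, Summable fun n => ‖E n (x n)‖ ^ 2 := fun x =>
    Summable.of_nonneg_of_le (fun n => sq_nonneg _) (fun n => hle n _) (lp_summable x)
  have hs : ∀ x : lp G 2, Summable fun n => ‖shiftFun B E x n‖ ^ 2 := fun x =>
    (summable_nat_add_iff 1).1 (hs1 x)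
  let C₀ : lp G 2 →ₗ[ℂ] lp G 2 :=
    { toFun := fun x => ⟨shiftFun B E x, memℓp_gen (by simpa using hs x)⟩
      map_add' := fun x y => by
        ext n
        cases n with
        | zero => exact map_add B _ _
        | succ n => exact map_add (E n) _ _
      map_smul' := fun c x => by
        ext n
        cases n with
        | zero => exact map_smul B _ _
        | succ n => exact map_smul (E n) _ _ }
  have hn : ∀ x, ‖C₀ x‖ = ‖x‖ := fun x => by
    rw [← sq_eq_sq₀ (norm_nonneg _) (norm_nonneg _), lp_norm_sq, lp_norm_sq]
    change ∑' n, ‖shiftFun B E x n‖ ^ 2 = _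
    rw [(hs x).tsum_eq_zero_add, (lp_summable x).tsum_eq_zero_add]
    change ‖B (x 0)‖ ^ 2 + ∑' n, ‖E n (x n)‖ ^ 2 = _
    rw [(hs1 x).tsum_eq_zero_add, ← add_assoc, h0]
    simp only [hE]
  exact ⟨C₀.mkContinuous 1 (fun x => by rw [hn, one_mul]), hn, fun x => rfl, fun x n => rfl⟩

variable [∀ i, CompleteSpace (G i)]

lemma coiso_of_seq {A : Type u} [CStarAlgebra A] (α : A →⋆ₐ[ℂ] A)
    (σ : ∀ n, A →⋆ₐ[ℂ] (G n →L[ℂ] G n)) (T : G 0 →L[ℂ] G 0)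
    (hcov : ∀ a : A, T ∘L σ 0 (α a) = σ 0 a ∘L T)
    (E : ∀ n, G n →L[ℂ] G (n+1))
    (h0 : ∀ x, ‖adjoint T x‖ ^ 2 + ‖E 0 x‖ ^ 2 = ‖x‖ ^ 2) (hE : ∀ n x, ‖E (n+1) x‖ = ‖x‖)
    (hσ : ∀ n a x, E n (σ n a x) = σ (n+1) (α a) (E n x)) :
    ∃ (ρ : A →⋆ₐ[ℂ] (lp G 2 →L[ℂ] lp G 2)) (V : lp G 2 →L[ℂ] lp G 2) (ι : G 0 →L[ℂ] lp G 2),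
      adjoint ι ∘L ι = 1 ∧
      (∀ a : A, ρ a ∘L ι = ι ∘L σ 0 a) ∧
      V ∘L ι = ι ∘L T ∧
      (∀ a : A, V ∘L ρ (α a) = ρ a ∘L V) ∧
      V ∘L adjoint V = 1 := by
  obtain ⟨C, hC, hC0, hCs⟩ := exists_shift (adjoint T) E h0 hE
  have hcov' : ∀ a x, adjoint T (σ 0 a x) = σ 0 (α a) (adjoint T x) := fun a x => by
    exact DFunLike.congr_fun (adj_cov (σ 0) T α (StarAlgHom.id ℂ A) hcov a) x
  have hCρ : ∀ a, C ∘L dsum σ a = dsum σ (α a) ∘L C := fun a => by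
    ext x n
    cases n with
    | zero =>
      rw [comp_apply, comp_apply, hC0, dsum_apply, dsum_apply, hC0, hcov']
    | succ n =>
      rw [comp_apply, comp_apply, hCs, dsum_apply, dsum_apply, hCs, hσ]
  refine ⟨dsum σ, adjoint C, lp.singleContinuousLinearMap ℂ G 2 0, ?_, ?_, ?_, ?_, ?_⟩
  · rw [← ContinuousLinearMap.norm_map_iff_adjoint_comp_self]
    intro x
    exact lp.norm_single (by norm_num) 0 x
  · intro a
    ext x n
    rw [comp_apply, comp_apply, dsum_apply]
    simp only [lp.singleContinuousLinearMap_apply]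
    cases n with
    | zero => rw [lp.single_apply_self, lp.single_apply_self]
    | succ n =>
      rw [lp.single_apply_ne _ _ _ (by omega), lp.single_apply_ne _ _ _ (by omega), map_zero]
  · ext1 x
    refine ext_inner_right ℂ (fun y => ?_)
    rw [comp_apply, comp_apply, adjoint_inner_left]
    simp only [lp.singleContinuousLinearMap_apply]
    rw [lp.inner_single_left, lp.inner_single_left, hC0, adjoint_inner_right]
  · intro a
    exact adj_cov (dsum σ) C (StarAlgHom.id ℂ A) α hCρ a
  · rw [adjoint_adjoint, ← ContinuousLinearMap.norm_map_iff_adjoint_comp_self]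
    exact hC

end seq

lemma exists_defect {A : Type u} [CStarAlgebra A]
    {H : Type w} [NormedAddCommGroup H] [InnerProductSpace ℂ H] [CompleteSpace H]
    (α : A →⋆ₐ[ℂ] A) (π : A →⋆ₐ[ℂ] (H →L[ℂ] H))
    (T : H →L[ℂ] H) (hT : ‖T‖ ≤ 1)
    (hcov : ∀ a : A, T ∘L π (α a) = π a ∘L T) :
    ∃ D : H →L[ℂ] H, (∀ x, ‖adjoint T x‖ ^ 2 + ‖D x‖ ^ 2 = ‖x‖ ^ 2) ∧
      ∀ a x, D (π a x) = π a (D x) := by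
  have hpos : (0 : H →L[ℂ] H) ≤ 1 - T * star T := by
    rw [sub_nonneg]
    have h1 := CStarAlgebra.norm_le_one_iff_of_nonneg (T * star T) (mul_star_self_nonneg T)
    rw [← h1, CStarRing.norm_self_mul_star]
    nlinarith [norm_nonneg T]
  have hcov' : ∀ a, star T * π a = π (α a) * star T := fun a => by
    exact adj_cov π T α (StarAlgHom.id ℂ A) hcov a
  have hcomm : ∀ a, Commute (1 - T * star T) (π a) := fun a => by
    refine Commute.sub_left (Commute.one_left _) ?_
    have h2 : T * π (α a) = π a * T := hcov a
    change T * star T * π a = π a * (T * star T)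
    rw [mul_assoc, hcov', ← mul_assoc, h2, mul_assoc]
  let D := CFC.sqrt (1 - T * star T)
  have hD : D * D = 1 - T * star T := CFC.sqrt_mul_sqrt_self _ hpos
  have hDs : IsSelfAdjoint D := IsSelfAdjoint.of_nonneg (CFC.sqrt_nonneg _)
  refine ⟨D, fun x => ?_, fun a x => ?_⟩
  · have e1 : ⟪D x, D x⟫_ℂ = ⟪x, (D * D) x⟫_ℂ := by
      have : adjoint D = D := hDs
      conv_lhs => rw [← this]
      rw [adjoint_inner_left, this]; rfl
    have e2 : ⟪adjoint T x, adjoint T x⟫_ℂ = ⟪x, (T * star T) x⟫_ℂ := by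
      rw [adjoint_inner_left]; rfl
    have e3 : ⟪adjoint T x, adjoint T x⟫_ℂ + ⟪D x, D x⟫_ℂ = ⟪x, x⟫_ℂ := by
      rw [e1, e2, hD, ← inner_add_right, ← add_apply, add_sub_cancel]; rfl
    rw [inner_self_eq_norm_sq_to_K, inner_self_eq_norm_sq_to_K, inner_self_eq_norm_sq_to_K] at e3
    exact_mod_cast e3
  · have : Commute D (π a) := (hcomm a).cfcₙ_nnreal _
    exact DFunLike.congr_fun this.eq x

/-- bundled representation -/
structure Rep (A : Type u) [CStarAlgebra A] where
  L : Type (max u v)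
  [n : NormedAddCommGroup L]
  [i : InnerProductSpace ℂ L]
  [c : CompleteSpace L]
  σ : A →⋆ₐ[ℂ] (L →L[ℂ] L)

attribute [instance] Rep.n Rep.i Rep.c

lemma exists_next {A : Type u} [CStarAlgebra A] (α : A →⋆ₐ[ℂ] A) (hα : Function.Injective α)
    (R : Rep.{u, v} A) : ∃ (R' : Rep.{u, v} A) (J : R.L →L[ℂ] R'.L),
      (∀ x, ‖J x‖ = ‖x‖) ∧ ∀ a x, J (R.σ a x) = R'.σ (α a) (J x) := by
  let _ := CStarAlgebra.spectralOrder A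
  have _ := CStarAlgebra.spectralOrderedRing A
  obtain ⟨L', h1, h2, h3, σ', J, hJ⟩ := extend_rep.{u, max u v} α hα R.σ
  exact ⟨@Rep.mk A _ L' h1 h2 h3 σ', J, hJ⟩

/-- iterate -/
def seqR {A : Type u} [CStarAlgebra A] (next : Rep.{u, v} A → Rep.{u, v} A) (R : Rep.{u, v} A) :
    ℕ → Rep.{u, v} A
  | 0 => R
  | n+1 => next (seqR next R n)

theorem main_aux
    {A : Type u} [CStarAlgebra A]
    {H : Type (max u v)} [NormedAddCommGroup H] [InnerProductSpace ℂ H] [CompleteSpace H]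
    (α : A →⋆ₐ[ℂ] A) (hα : Function.Injective α)
    (π : A →⋆ₐ[ℂ] (H →L[ℂ] H))
    (T : H →L[ℂ] H) (hT : ‖T‖ ≤ 1)
    (hcov : ∀ a : A, T ∘L π (α a) = π a ∘L T) :
    ∃ (K : Type (max u v)) (_ : NormedAddCommGroup K) (_ : InnerProductSpace ℂ K)
      (_ : CompleteSpace K) (ρ : A →⋆ₐ[ℂ] (K →L[ℂ] K)) (V : K →L[ℂ] K) (ι : H →L[ℂ] K),
      adjoint ι ∘L ι = 1 ∧
      (∀ a : A, ρ a ∘L ι = ι ∘L π a) ∧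
      V ∘L ι = ι ∘L T ∧
      (∀ a : A, V ∘L ρ (α a) = ρ a ∘L V) ∧
      V ∘L adjoint V = 1 := by
  obtain ⟨D, hD1, hD2⟩ := exists_defect α π T hT hcov
  choose next J hJ1 hJ2 using exists_next.{u, v} α hα
  let R0 : Rep.{u, v} A := ⟨H, π⟩
  let R : ℕ → Rep.{u, v} A := seqR next R0
  let E : ∀ n, (R n).L →L[ℂ] (R (n+1)).L := fun n =>
    Nat.rec (motive := fun n => (R n).L →L[ℂ] (R (n+1)).L)
      ((J R0).comp (show R0.L →L[ℂ] R0.L from D)) (fun n _ => J (R (n+1))) n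
  refine ⟨lp (fun n => (R n).L) 2, inferInstance, inferInstance, inferInstance, ?_⟩
  refine coiso_of_seq α (fun n => (R n).σ) T hcov E ?_ ?_ ?_
  · intro x
    have h : ‖E 0 x‖ = ‖D x‖ := hJ1 R0 (D x)
    rw [h]
    exact hD1 x
  · intro n x
    exact hJ1 (R (n+1)) x
  · intro n a x
    cases n with
    | zero =>
      have h1 : J R0 (D (π a x)) = J R0 (π a (D x)) := congrArg (J R0) (hD2 a x)
      exact h1.trans (hJ2 R0 a (D x))
    | succ n => exact hJ2 (R (n+1)) a x

end CoisoExt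

/-- **Theorem 1, coisometric extension.** Every contractive covariant
representation `(π, T)` of `(A, α)` on `H` extends to a coisometric covariant representation
`(ρ, V)` on a Hilbert space `K ⊇ H`: there is an isometric embedding `ι : H → K` with
`ρ(a)` leaving (the image of) `H` invariant and restricting there to `π(a)`, `V` leaving `H`
invariant and restricting there to `T`, `V ρ(α a) = ρ(a) V` for all `a ∈ A`, and `V V* = I`. -/
theorem exists_coisometric_extension
    {A : Type u} [CStarAlgebra A]
    {H : Type v} [NormedAddCommGroup H] [InnerProductSpace ℂ H] [CompleteSpace H]
    (α : A →⋆ₐ[ℂ] A) (hα : Function.Injective α) (hαone : α 1 = 1)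
    (π : A →⋆ₐ[ℂ] (H →L[ℂ] H))
    (T : H →L[ℂ] H) (hT : ‖T‖ ≤ 1)
    (hcov : ∀ a : A, T ∘L π (α a) = π a ∘L T) :
    ∃ (K : Type (max u v)) (_ : NormedAddCommGroup K) (_ : InnerProductSpace ℂ K)
      (_ : CompleteSpace K) (ρ : A →⋆ₐ[ℂ] (K →L[ℂ] K)) (V : K →L[ℂ] K) (ι : H →L[ℂ] K),
      adjoint ι ∘L ι = 1 ∧
      (∀ a : A, ρ a ∘L ι = ι ∘L π a) ∧
      V ∘L ι = ι ∘L T ∧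
      (∀ a : A, V ∘L ρ (α a) = ρ a ∘L V) ∧
      V ∘L adjoint V = 1 := by
  classical
  let H' : Type (max u v) := lp (fun _ : PUnit.{u+1} => H) 2
  let j : H →L[ℂ] H' := lp.singleContinuousLinearMap ℂ (fun _ : PUnit.{u+1} => H) 2 PUnit.unit
  let π' : A →⋆ₐ[ℂ] (H' →L[ℂ] H') := CoisoExt.dsum (fun _ : PUnit.{u+1} => π)
  let T' : H' →L[ℂ] H' := CoisoExt.diag 1 zero_le_one (fun _ : PUnit.{u+1} => T) (fun _ => hT)
  have hT' : ‖T'‖ ≤ 1 := LinearMap.mkContinuous_norm_le _ zero_le_one _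
  obtain ⟨K, h1, h2, h3, ρ, V, ι, a1, a2, a3, a4, a5⟩ := CoisoExt.main_aux.{u, v} α hα π' T' hT'
    (fun a => by
      ext x i
      exact DFunLike.congr_fun (hcov a) (x i))
  refine ⟨K, h1, h2, h3, ρ, V, ι ∘L j, ?_, ?_, ?_, a4, a5⟩
  · rw [← ContinuousLinearMap.norm_map_iff_adjoint_comp_self] at a1 ⊢
    intro x
    rw [comp_apply, a1]
    exact lp.norm_single (p := 2) (E := fun _ : PUnit.{u+1} => H) (by norm_num) PUnit.unit x
  · intro a
    rw [← comp_assoc, a2, comp_assoc, comp_assoc]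
    congr 1
  · rw [← comp_assoc, a3, comp_assoc, comp_assoc]
    congr 1
end
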